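/- (Santaló point) Let X ⊂ ℝⁿ be a convex body (compact, convex, with nonempty interior) and ħ > 0. Then there exists a unique point x_S in the interior of X such that the polar body X^ħ(x_S) = (X − x_S)^ħ has centroid 0, and for this point the volume Vol((X − x_S)^ħ) is minimal among Vol((X − x₀)^ħ) over all interior points x₀ of X. -/

import Mathlib

open MeasureTheory
open scoped RealInnerProductSpace

/-- The `ħ`-polar dual of a set `Y ⊂ ℝⁿ`: all `p` with `p·y ≤ ħ` for every `y ∈ Y`. -/
def polarDualSet (n : ℕ) (hb : ℝ) (Y : Set (EuclideanSpace ℝ (Fin n))) :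
    Set (EuclideanSpace ℝ (Fin n)) :=
  {p | ∀ y ∈ Y, (⟪p, y⟫ : ℝ) ≤ hb}

/-- The centroid `(1/Vol K) ∫_K p dp` of a set `K ⊂ ℝⁿ`. -/
noncomputable def setCentroid (n : ℕ) (K : Set (EuclideanSpace ℝ (Fin n))) :
    EuclideanSpace ℝ (Fin n) :=
  ((volume K).toReal)⁻¹ • ∫ p in K, p

open Set Filter Topology

open scoped Pointwise in
lemma layer_cake_homog {n : ℕ} (g : EuclideanSpace ℝ (Fin n) → ℝ) (hgm : Measurable g)
    (hg0 : ∀ p, 0 ≤ g p) (hgh : ∀ t : ℝ, 0 < t → ∀ p, g (t • p) = t * g p)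
    (φ : EuclideanSpace ℝ (Fin n) → ℝ) (hφm : Measurable φ) (k : ℕ)
    (hφ : ∀ t : ℝ, 0 < t → ∀ p, φ (t • p) = t ^ k * φ p)
    (hint : Integrable (fun p => φ p * Real.exp (-g p))) :
    ∫ p, φ p * Real.exp (-g p) =
      (∫ t in Ioi (0 : ℝ), Real.exp (-t) * t ^ (n + k)) * ∫ p in {p | g p ≤ 1}, φ p := by
  have hin : ∀ p, ∫ t, (Ici (g p)).indicator (fun t => Real.exp (-t)) t = Real.exp (-g p) := by
    intro p
    rw [integral_indicator measurableSet_Ici, integral_Ici_eq_integral_Ioi, integral_exp_neg_Ioi]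
  have hinI : ∀ p, Integrable ((Ici (g p)).indicator (fun t => Real.exp (-t))) := by
    intro p
    rw [integrable_indicator_iff measurableSet_Ici, integrableOn_Ici_iff_integrableOn_Ioi]
    exact integrableOn_exp_neg_Ioi _
  let f : EuclideanSpace ℝ (Fin n) → ℝ → ℝ :=
    fun p t => φ p * (Ici (g p)).indicator (fun t => Real.exp (-t)) t
  have hfm : Measurable (Function.uncurry f) := by
    have h1 : MeasurableSet {q : EuclideanSpace ℝ (Fin n) × ℝ | g q.1 ≤ q.2} :=
      measurableSet_le (hgm.comp measurable_fst) measurable_snd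
    have h2 : Function.uncurry f = fun q => φ q.1 *
        ({q : EuclideanSpace ℝ (Fin n) × ℝ | g q.1 ≤ q.2}).indicator
          (fun q => Real.exp (-q.2)) q := by
      ext q
      simp [f, Function.uncurry, indicator]
    rw [h2]
    refine (hφm.comp measurable_fst).mul (Measurable.indicator ?_ h1)
    fun_prop
  have hfi : Integrable (Function.uncurry f) (volume.prod volume) := by
    rw [integrable_prod_iff hfm.aestronglyMeasurable]
    refine ⟨Eventually.of_forall fun p => (hinI p).const_mul (φ p), ?_⟩
    refine hint.norm.congr (Eventually.of_forall fun p => ?_)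
    have : ∀ t, ‖Function.uncurry f (p, t)‖ =
        ‖φ p‖ * (Ici (g p)).indicator (fun t => Real.exp (-t)) t := by
      intro t
      simp only [f, Function.uncurry, norm_mul]
      congr 1
      rw [Real.norm_of_nonneg]
      exact indicator_nonneg (fun _ _ => (Real.exp_pos _).le) _
    simp only [this]
    rw [integral_const_mul, hin, norm_mul, Real.norm_of_nonneg (Real.exp_pos _).le]
  have hswap := integral_integral_swap hfi
  have hL : ∫ p, φ p * Real.exp (-g p) = ∫ p, ∫ t, f p t := by
    congr 1; ext p
    simp only [f]
    rw [integral_const_mul, hin]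
  rw [hL, hswap, ← integral_mul_const, ← integral_indicator measurableSet_Ioi]
  apply integral_congr_ae
  have h0 : ∀ᵐ t : ℝ, t ≠ 0 := by
    simp [ae_iff]
  filter_upwards [h0] with t ht
  have hft : ∀ p, f p t = Real.exp (-t) * ({p | g p ≤ t}).indicator φ p := by
    intro p
    by_cases h : g p ≤ t <;> simp [f, h, mul_comm]
  simp only [hft]
  have hms : ∀ t, MeasurableSet {p | g p ≤ t} := fun t => measurableSet_le hgm measurable_const
  rw [integral_const_mul, integral_indicator (hms t)]
  rcases lt_or_gt_of_ne ht with h | h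
  · have : {p | g p ≤ t} = ∅ := by
      ext p; simp; linarith [hg0 p]
    simp [this, h.le]
  · rw [indicator_of_mem (show t ∈ Ioi (0 : ℝ) from h), mul_assoc]
    congr 1
    have hs : {p | g p ≤ t} = t • {p | g p ≤ 1} := by
      ext p
      rw [mem_smul_set_iff_inv_smul_mem₀ h.ne']
      simp only [mem_ofPred_eq]
      rw [hgh _ (inv_pos.2 h), inv_mul_le_iff₀ h, mul_one]
    have := Measure.setIntegral_comp_smul_of_pos volume φ {p | g p ≤ 1} h
    rw [← hs] at this
    simp only [hφ t h, integral_const_mul, finrank_euclideanSpace_fin, smul_eq_mul] at this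
    have h3 : t ^ n ≠ 0 := (pow_pos h n).ne'
    rw [pow_add, mul_assoc, this, ← mul_assoc, mul_inv_cancel₀ h3, one_mul]

lemma gam_pos (m : ℕ) : 0 < ∫ t in Ioi (0 : ℝ), Real.exp (-t) * t ^ m := by
  have := Real.Gamma_eq_integral (s := m + 1) (by positivity)
  simp only [add_sub_cancel_right, Real.rpow_natCast] at this
  rw [← this]
  exact Real.Gamma_pos_of_pos (by positivity)

lemma integrable_dom {n : ℕ} {c : ℝ} (hc : 0 < c) :
    Integrable (fun p : EuclideanSpace ℝ (Fin n) => (1 + ‖p‖) * Real.exp (-(c * ‖p‖))) := by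
  have h1 := integrable_one_add_norm (E := EuclideanSpace ℝ (Fin n)) (μ := volume)
    (r := ((n + 1 : ℕ) : ℝ)) (by simp)
  refine (h1.const_mul ((n + 2).factorial * Real.exp c / c ^ (n + 2))).mono'
    (by fun_prop) (Eventually.of_forall fun p => ?_)
  have hr : 0 ≤ ‖p‖ := norm_nonneg p
  rw [Real.norm_of_nonneg (by positivity), Real.rpow_neg (by positivity), Real.rpow_natCast]
  have h2 := Real.pow_div_factorial_le_exp (c * (1 + ‖p‖)) (by positivity) (n + 2)
  rw [div_le_iff₀ (by positivity), mul_pow, mul_add, Real.exp_add, mul_one] at h2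
  rw [Real.exp_neg, ← div_eq_mul_inv, ← div_eq_mul_inv, div_div, div_le_div_iff₀ (by positivity)
    (by positivity)]
  calc _ = c ^ (n + 2) * (1 + ‖p‖) ^ (n + 2) := by ring
    _ ≤ _ := h2
    _ = _ := by ring

/-- `h` is the support function of `X`. -/
def IsSupp {n : ℕ} (X : Set (EuclideanSpace ℝ (Fin n))) (h : EuclideanSpace ℝ (Fin n) → ℝ) : Prop :=
  ∀ p c, h p ≤ c ↔ ∀ y ∈ X, (⟪p, y⟫ : ℝ) ≤ c

section supp
variable {n : ℕ} {X : Set (EuclideanSpace ℝ (Fin n))} {h : EuclideanSpace ℝ (Fin n) → ℝ}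

lemma exists_supp (hX : IsCompact X) (hne : X.Nonempty) : ∃ h, IsSupp X h := by
  refine ⟨fun p => sSup ((fun y => (⟪p, y⟫ : ℝ)) '' X), fun p c => ?_⟩
  have hb : BddAbove ((fun y => (⟪p, y⟫ : ℝ)) '' X) :=
    (hX.image (by fun_prop)).bddAbove
  rw [csSup_le_iff hb (hne.image _)]
  simp

lemma IsSupp.le (hh : IsSupp X h) (p : EuclideanSpace ℝ (Fin n)) {y} (hy : y ∈ X) :
    (⟪p, y⟫ : ℝ) ≤ h p := (hh p (h p)).1 le_rfl y hy

lemma IsSupp.measurable (hh : IsSupp X h) : Measurable h := by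
  apply measurable_of_Iic
  intro c
  have : h ⁻¹' Iic c = ⋂ y ∈ X, {p | (⟪p, y⟫ : ℝ) ≤ c} := by
    ext p; simp [hh p c]
  rw [this]
  apply IsClosed.measurableSet
  exact isClosed_biInter fun y _ => isClosed_le (by fun_prop) continuous_const

lemma IsSupp.hom (hh : IsSupp X h) (t : ℝ) (ht : 0 < t) (p : EuclideanSpace ℝ (Fin n)) :
    h (t • p) = t * h p := by
  apply eq_of_forall_ge_iff
  intro c
  rw [hh, ← le_div_iff₀' ht, hh]
  refine forall₂_congr fun y _ => ?_
  rw [real_inner_smul_left, le_div_iff₀' ht]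

lemma IsSupp.add_le (hh : IsSupp X h) (p q : EuclideanSpace ℝ (Fin n)) :
    h (p + q) ≤ h p + h q := by
  rw [hh]
  intro y hy
  rw [inner_add_left]
  linarith [hh.le p hy, hh.le q hy]

lemma IsSupp.lower (hh : IsSupp X h) {x : EuclideanSpace ℝ (Fin n)} {δ : ℝ} (hδ : 0 < δ)
    (hb : Metric.closedBall x δ ⊆ X) (p : EuclideanSpace ℝ (Fin n)) :
    δ * ‖p‖ ≤ h p - ⟪p, x⟫ := by
  have hy : x + (δ / ‖p‖) • p ∈ X := by
    apply hb
    rw [mem_closedBall_iff_norm, add_sub_cancel_left, norm_smul, norm_div, norm_norm,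
      Real.norm_of_nonneg hδ.le]
    by_cases h0 : ‖p‖ = 0
    · simp [h0, hδ.le]
    · rw [div_mul_cancel₀ _ h0]
  have := hh.le p hy
  rw [inner_add_right, real_inner_smul_right, real_inner_self_eq_norm_sq] at this
  have h2 : δ / ‖p‖ * ‖p‖ ^ 2 = δ * ‖p‖ := by
    by_cases h0 : ‖p‖ = 0
    · simp [h0]
    · field_simp
  linarith

lemma exists_ball {x : EuclideanSpace ℝ (Fin n)} (hx : x ∈ interior X) :
    ∃ δ > 0, Metric.closedBall x δ ⊆ X := by
  have := mem_interior_iff_mem_nhds.1 hx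
  exact Metric.nhds_basis_closedBall.mem_iff.1 this

/-- weight -/
noncomputable def wt (hb : ℝ) (h : EuclideanSpace ℝ (Fin n) → ℝ) (x p : EuclideanSpace ℝ (Fin n)) : ℝ :=
  Real.exp (-((h p - ⟪p, x⟫) / hb))

lemma wt_pos (hb : ℝ) (x p : EuclideanSpace ℝ (Fin n)) : 0 < wt hb h x p := Real.exp_pos _

lemma wt_meas (hh : IsSupp X h) (hb : ℝ) (x : EuclideanSpace ℝ (Fin n)) : Measurable (wt hb h x) := by
  have := hh.measurable
  unfold wt
  fun_prop

lemma wt_le (hh : IsSupp X h) {hb : ℝ} (hhb : 0 < hb) {x : EuclideanSpace ℝ (Fin n)} {δ : ℝ}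
    (hδ : 0 < δ) (hball : Metric.closedBall x δ ⊆ X) (p : EuclideanSpace ℝ (Fin n)) :
    wt hb h x p ≤ Real.exp (-(δ / hb * ‖p‖)) := by
  unfold wt
  apply Real.exp_le_exp.2
  rw [neg_le_neg_iff, div_mul_eq_mul_div]
  exact div_le_div_of_nonneg_right (hh.lower hδ hball p) hhb.le

lemma wt_int (hh : IsSupp X h) {hb : ℝ} (hhb : 0 < hb) {x : EuclideanSpace ℝ (Fin n)}
    (hx : x ∈ interior X) : Integrable (wt hb h x) := by
  obtain ⟨δ, hδ, hball⟩ := exists_ball hx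
  refine (integrable_dom (div_pos hδ hhb)).mono' (wt_meas hh hb x).aestronglyMeasurable
    (Eventually.of_forall fun p => ?_)
  rw [Real.norm_of_nonneg (wt_pos _ _ _).le]
  refine (wt_le hh hhb hδ hball p).trans (le_mul_of_one_le_left (Real.exp_pos _).le ?_)
  linarith [norm_nonneg p]

lemma wt_inner_int (hh : IsSupp X h) {hb : ℝ} (hhb : 0 < hb) {x : EuclideanSpace ℝ (Fin n)}
    (hx : x ∈ interior X) (v : EuclideanSpace ℝ (Fin n)) :
    Integrable (fun p => (⟪p, v⟫ : ℝ) * wt hb h x p) := by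
  obtain ⟨δ, hδ, hball⟩ := exists_ball hx
  have hm := wt_meas hh hb x
  refine ((integrable_dom (div_pos hδ hhb)).const_mul ‖v‖).mono'
    (by fun_prop) (Eventually.of_forall fun p => ?_)
  rw [norm_mul, Real.norm_of_nonneg (wt_pos _ _ _).le]
  have h1 := wt_le hh hhb hδ hball p
  have h2 : ‖(⟪p, v⟫ : ℝ)‖ ≤ ‖v‖ * (1 + ‖p‖) := by
    have := norm_inner_le_norm (𝕜 := ℝ) p v
    nlinarith [norm_nonneg p, norm_nonneg v]
  rw [← mul_assoc]
  have := wt_pos (h := h) hb x p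
  gcongr

lemma wt_shift {hb : ℝ} (x y p : EuclideanSpace ℝ (Fin n)) :
    wt hb h y p = wt hb h x p * Real.exp (⟪p, y - x⟫ / hb) := by
  unfold wt
  rw [← Real.exp_add, inner_sub_right]
  congr 1
  ring

/-- A zero of the first moment is a strict minimum. -/
lemma strict_min (hh : IsSupp X h) {hb : ℝ} (hhb : 0 < hb) {x y : EuclideanSpace ℝ (Fin n)}
    (hx : x ∈ interior X) (hy : y ∈ interior X) (hxy : x ≠ y)
    (h0 : ∀ v, ∫ p, (⟪p, v⟫ : ℝ) * wt hb h x p = 0) :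
    ∫ p, wt hb h x p < ∫ p, wt hb h y p := by
  have hw : y - x ≠ 0 := sub_ne_zero.2 hxy.symm
  have i1 := wt_int hh hhb hx
  have i2 := wt_int hh hhb hy
  have i3 := (wt_inner_int hh hhb hx (y - x)).const_mul (1 / hb)
  have key : ∀ p, wt hb h y p - wt hb h x p - 1 / hb * ((⟪p, y - x⟫ : ℝ) * wt hb h x p) =
      wt hb h x p * (Real.exp (⟪p, y - x⟫ / hb) - (⟪p, y - x⟫ / hb + 1)) := by
    intro p
    rw [wt_shift x y p]; ring
  have hpos : 0 < ∫ p, (wt hb h y p - wt hb h x p -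
      1 / hb * ((⟪p, y - x⟫ : ℝ) * wt hb h x p)) := by
    rw [integral_pos_iff_support_of_nonneg]
    · refine lt_of_lt_of_le (IsOpen.measure_pos volume
        (U := {p : EuclideanSpace ℝ (Fin n) | (⟪p, y - x⟫ : ℝ) ≠ 0}) ?_ ?_) (measure_mono ?_)
      · exact isOpen_ne_fun (by fun_prop) continuous_const
      · exact ⟨y - x, by simpa using hw⟩
      · intro p hp
        rw [Function.mem_support, key]
        have := Real.add_one_lt_exp (div_ne_zero hp hhb.ne')
        have h1 := wt_pos (h := h) hb x p
        exact (mul_pos h1 (by linarith)).ne'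
    · intro p
      simp only [Pi.zero_apply]
      rw [key]
      have := Real.add_one_le_exp ((⟪p, y - x⟫ : ℝ) / hb)
      exact mul_nonneg (wt_pos hb x p).le (by linarith)
    · exact (i2.sub i1).sub i3
  have i4 : Integrable (fun p => wt hb h y p - wt hb h x p) := i2.sub i1
  rw [integral_sub i4 i3, integral_sub i2 i1, integral_const_mul, h0] at hpos
  linarith

/-- At a minimum, the first moment vanishes. -/
lemma moment_zero (hh : IsSupp X h) {hb : ℝ} (hhb : 0 < hb) {x : EuclideanSpace ℝ (Fin n)}
    (hx : x ∈ interior X) (hmin : ∀ y ∈ interior X, ∫ p, wt hb h x p ≤ ∫ p, wt hb h y p)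
    (v : EuclideanSpace ℝ (Fin n)) : ∫ p, (⟪p, v⟫ : ℝ) * wt hb h x p = 0 := by
  obtain ⟨δ, hδ, hball⟩ := exists_ball hx
  have hδ2 : 0 < δ / 2 := by positivity
  have hcont : Continuous fun t : ℝ => x + t • v := by fun_prop
  have hs : {t : ℝ | x + t • v ∈ Metric.ball x (δ / 2)} ∈ 𝓝 (0 : ℝ) := by
    apply hcont.continuousAt.preimage_mem_nhds
    simpa using Metric.ball_mem_nhds x hδ2
  have hm := wt_meas hh hb
  have hd := hasDerivAt_integral_of_dominated_loc_of_deriv_le (μ := volume) (x₀ := (0 : ℝ))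
    (F := fun t p => wt hb h (x + t • v) p)
    (F' := fun t p => (⟪p, v⟫ : ℝ) / hb * wt hb h (x + t • v) p)
    (bound := fun p => ‖v‖ / hb * ((1 + ‖p‖) * Real.exp (-(δ / 2 / hb * ‖p‖)))) hs
    (Eventually.of_forall fun t => (hm _).aestronglyMeasurable)
    (by simpa using wt_int hh hhb hx)
    (by
      have := hm (x + (0 : ℝ) • v)
      apply Measurable.aestronglyMeasurable
      fun_prop)
    (Eventually.of_forall fun p t ht => by
      have hb2 : Metric.closedBall (x + t • v) (δ / 2) ⊆ X := by
        refine (Metric.closedBall_subset_closedBall' ?_).trans hball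
        have := Metric.mem_ball.1 ht
        linarith
      have h1 := wt_le hh hhb hδ2 hb2 p
      have h2 : ‖(⟪p, v⟫ : ℝ)‖ ≤ ‖v‖ * (1 + ‖p‖) := by
        have := norm_inner_le_norm (𝕜 := ℝ) p v
        nlinarith [norm_nonneg p, norm_nonneg v]
      rw [norm_mul, norm_div, Real.norm_of_nonneg hhb.le, Real.norm_of_nonneg (wt_pos _ _ _).le]
      have := wt_pos (h := h) hb (x + t • v) p
      calc _ ≤ ‖v‖ * (1 + ‖p‖) / hb * Real.exp (-(δ / 2 / hb * ‖p‖)) := by gcongr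
        _ = _ := by ring)
    ((integrable_dom (div_pos hδ2 hhb)).const_mul _)
    (Eventually.of_forall fun p t _ => by
      have h1 : HasDerivAt (fun t : ℝ => -((h p - (⟪p, x⟫ + t * ⟪p, v⟫)) / hb))
          (-((0 - (0 + 1 * ⟪p, v⟫)) / hb)) t := by
        have := (((hasDerivAt_const t (h p)).sub ((hasDerivAt_const t (⟪p, x⟫ : ℝ)).add
          ((hasDerivAt_id t).mul_const (⟪p, v⟫ : ℝ)))).div_const hb).neg
        exact this
      have h2 := h1.exp
      simp only [wt, inner_add_right, real_inner_smul_right]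
      refine h2.congr_deriv ?_
      ring)
  have hlm : IsLocalMin (fun t : ℝ => ∫ p, wt hb h (x + t • v) p) 0 := by
    filter_upwards [hs] with t ht
    simp only [zero_smul, add_zero]
    apply hmin
    apply interior_mono hball
    apply interior_mono Metric.ball_subset_closedBall
    rw [Metric.isOpen_ball.interior_eq]
    exact Metric.ball_subset_ball (by linarith) ht
  have h3 := hlm.hasDerivAt_eq_zero hd.2
  simp only [zero_smul, add_zero, div_mul_eq_mul_div] at h3
  rw [integral_div, div_eq_zero_iff] at h3
  exact h3.resolve_right hhb.ne'

lemma wt_top (hh : IsSupp X h) (hXc : IsCompact X) (hXconv : Convex ℝ X)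
    (hXint : (interior X).Nonempty) {hb : ℝ} (hhb : 0 < hb) {x : EuclideanSpace ℝ (Fin n)}
    (hx : x ∉ interior X) : ∫⁻ p, ENNReal.ofReal (wt hb h x p) = ⊤ := by
  obtain ⟨f, hf0, hf⟩ := geometric_hahn_banach_of_nonempty_interior_point hXconv hx hXint
  set u := (InnerProductSpace.toDual ℝ _).symm f with hu
  have hu0 : u ≠ 0 := by simpa [hu] using hf0
  have hun : 0 < ‖u‖ := norm_pos_iff.2 hu0
  have hgu : h u - ⟪u, x⟫ ≤ 0 := by
    rw [sub_nonpos, hh]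
    intro y hy
    simpa [hu] using hf y hy
  obtain ⟨R, hR⟩ := hXc.isBounded.exists_norm_le
  -- points
  have hgk : ∀ k : ℕ, ∀ p, ‖p‖ ≤ 1 → h (((k + 1 : ℝ) * (3 / ‖u‖)) • u + p) -
      ⟪((k + 1 : ℝ) * (3 / ‖u‖)) • u + p, x⟫ ≤ R + ‖x‖ := by
    intro k p hp
    have hk : (0 : ℝ) < (k + 1 : ℝ) * (3 / ‖u‖) := by positivity
    have h1 := hh.add_le (((k + 1 : ℝ) * (3 / ‖u‖)) • u) p
    rw [hh.hom _ hk] at h1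
    rw [inner_add_left, real_inner_smul_left]
    have h2 : h p ≤ R := by
      rw [hh]
      intro y hy
      have := real_inner_le_norm p y
      nlinarith [hR y hy, norm_nonneg p, norm_nonneg y]
    have h3 : -(⟪p, x⟫ : ℝ) ≤ ‖x‖ := by
      have := abs_real_inner_le_norm p x
      have := neg_abs_le (⟪p, x⟫ : ℝ)
      nlinarith [norm_nonneg p, norm_nonneg x]
    nlinarith [mul_nonpos_of_nonneg_of_nonpos hk.le hgu]
  let S : ℕ → Set (EuclideanSpace ℝ (Fin n)) :=
    fun k => Metric.closedBall (((k + 1 : ℝ) * (3 / ‖u‖)) • u) 1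
  have hdisj : Pairwise (Function.onFun Disjoint S) := by
    intro i j hij
    apply Metric.closedBall_disjoint_closedBall
    rw [dist_eq_norm, ← sub_smul, norm_smul, ← sub_mul, norm_mul, norm_div, norm_norm, mul_assoc,
      div_mul_cancel₀ _ hun.ne', Real.norm_eq_abs, Real.norm_eq_abs]
    have : (1 : ℝ) ≤ |(i + 1 : ℝ) - (j + 1)| := by
      rw [add_sub_add_right_eq_sub]
      have : (1 : ℤ) ≤ |(i : ℤ) - j| := by
        apply Int.one_le_abs; omega
      exact_mod_cast this
    rw [abs_of_pos (by norm_num : (0 : ℝ) < 3)]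
    linarith
  have hvol : volume (⋃ k, S k) = ⊤ := by
    rw [measure_iUnion hdisj (fun k => Metric.isClosed_closedBall.measurableSet)]
    have : ∀ k, volume (S k) = volume (Metric.closedBall (0 : EuclideanSpace ℝ (Fin n)) 1) :=
      fun k => Measure.addHaar_closedBall_center _ _ _
    simp only [this]
    exact ENNReal.tsum_const_eq_top_of_ne_zero (Metric.measure_closedBall_pos _ _ one_pos).ne'
  have hc : 0 < Real.exp (-((R + ‖x‖) / hb)) := Real.exp_pos _
  rw [eq_top_iff]
  calc ⊤ = ENNReal.ofReal (Real.exp (-((R + ‖x‖) / hb))) * volume (⋃ k, S k) := by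
        rw [hvol, ENNReal.mul_top]; simpa using hc
    _ = ∫⁻ p in ⋃ k, S k, ENNReal.ofReal (Real.exp (-((R + ‖x‖) / hb))) := by
        rw [setLIntegral_const]
    _ ≤ ∫⁻ p in ⋃ k, S k, ENNReal.ofReal (wt hb h x p) := by
        apply setLIntegral_mono'
        · exact MeasurableSet.iUnion fun k => Metric.isClosed_closedBall.measurableSet
        · intro p hp
          obtain ⟨k, hk⟩ := mem_iUnion.1 hp
          apply ENNReal.ofReal_le_ofReal
          unfold wt
          apply Real.exp_le_exp.2
          rw [neg_le_neg_iff]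
          apply div_le_div_of_nonneg_right _ hhb.le
          have := hgk k (p - ((k + 1 : ℝ) * (3 / ‖u‖)) • u) (mem_closedBall_iff_norm.1 hk)
          rwa [add_sub_cancel] at this
    _ ≤ _ := setLIntegral_le_lintegral _ _

lemma wt_lsc (hh : IsSupp X h) (hb : ℝ) :
    LowerSemicontinuous (fun x => ∫⁻ p, ENNReal.ofReal (wt hb h x p)) := by
  intro x
  change LowerSemicontinuousAt _ x
  rw [lowerSemicontinuousAt_iff_le_liminf]
  have := lintegral_liminf_le (μ := volume) (u := 𝓝 x) (f := fun y p => ENNReal.ofReal (wt hb h y p))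
    (fun y => (wt_meas hh hb y).ennreal_ofReal)
  refine le_trans (le_of_eq ?_) this
  congr 1; ext p
  have hc : Continuous fun y => ENNReal.ofReal (wt hb h y p) := by
    unfold wt; exact ENNReal.continuous_ofReal.comp (by fun_prop)
  exact (hc.tendsto x).liminf_eq.symm

lemma exists_min (hh : IsSupp X h) (hXc : IsCompact X) (hXconv : Convex ℝ X)
    (hXint : (interior X).Nonempty) {hb : ℝ} (hhb : 0 < hb) :
    ∃ x ∈ interior X, ∀ y ∈ interior X, ∫ p, wt hb h x p ≤ ∫ p, wt hb h y p := by
  obtain ⟨x, hxX, hx⟩ := LowerSemicontinuousOn.exists_isMinOn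
    (hXint.mono interior_subset) hXc ((wt_lsc hh hb).lowerSemicontinuousOn X)
  have heq : ∀ y ∈ interior X,
      ∫⁻ p, ENNReal.ofReal (wt hb h y p) = ENNReal.ofReal (∫ p, wt hb h y p) := fun y hy =>
    (ofReal_integral_eq_lintegral_ofReal (wt_int hh hhb hy)
      (Eventually.of_forall fun p => (wt_pos _ _ _).le)).symm
  have hxi : x ∈ interior X := by
    by_contra hxn
    obtain ⟨z, hz⟩ := hXint
    have h1 := hx (interior_subset hz)
    simp only [mem_ofPred_eq] at h1
    rw [wt_top hh hXc hXconv ⟨z, hz⟩ hhb hxn, heq z hz] at h1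
    exact ENNReal.ofReal_ne_top (top_le_iff.1 h1)
  refine ⟨x, hxi, fun y hy => ?_⟩
  have h1 := hx (interior_subset hy)
  simp only [mem_ofPred_eq] at h1
  rw [heq x hxi, heq y hy, ENNReal.ofReal_le_ofReal_iff] at h1
  · exact h1
  · exact integral_nonneg fun p => (wt_pos _ _ _).le

lemma polar_eq (hh : IsSupp X h) {hb : ℝ} (hhb : 0 < hb) (x : EuclideanSpace ℝ (Fin n)) :
    polarDualSet n hb ((fun y => y - x) '' X) = {p | (h p - ⟪p, x⟫) / hb ≤ 1} := by
  ext p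
  simp only [polarDualSet, mem_ofPred_eq, forall_mem_image]
  rw [div_le_one hhb, sub_le_iff_le_add, hh]
  refine forall₂_congr fun y _ => ?_
  rw [inner_sub_right, sub_le_iff_le_add]

lemma polar_compact (hh : IsSupp X h) {hb : ℝ} (hhb : 0 < hb) {x : EuclideanSpace ℝ (Fin n)}
    (hx : x ∈ interior X) : IsCompact (polarDualSet n hb ((fun y => y - x) '' X)) := by
  apply Metric.isCompact_of_isClosed_isBounded
  · have : polarDualSet n hb ((fun y => y - x) '' X) =
        ⋂ y ∈ (fun y => y - x) '' X, {p | (⟪p, y⟫ : ℝ) ≤ hb} := by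
      ext p; simp [polarDualSet]
    rw [this]
    exact isClosed_biInter fun y _ => isClosed_le (by fun_prop) continuous_const
  · obtain ⟨δ, hδ, hball⟩ := exists_ball hx
    rw [isBounded_iff_forall_norm_le]
    refine ⟨hb / δ, fun p hp => ?_⟩
    rw [polar_eq hh hhb, mem_ofPred_eq, div_le_one hhb] at hp
    rw [le_div_iff₀' hδ]
    exact (hh.lower hδ hball p).trans hp

lemma polar_integral (hh : IsSupp X h) {hb : ℝ} (hhb : 0 < hb) {x : EuclideanSpace ℝ (Fin n)}
    (hx : x ∈ interior X) (φ : EuclideanSpace ℝ (Fin n) → ℝ) (hφm : Measurable φ) (k : ℕ)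
    (hφ : ∀ t : ℝ, 0 < t → ∀ p, φ (t • p) = t ^ k * φ p)
    (hint : Integrable (fun p => φ p * wt hb h x p)) :
    ∫ p, φ p * wt hb h x p = (∫ t in Ioi (0 : ℝ), Real.exp (-t) * t ^ (n + k)) *
      ∫ p in polarDualSet n hb ((fun y => y - x) '' X), φ p := by
  rw [polar_eq hh hhb]
  obtain ⟨δ, hδ, hball⟩ := exists_ball hx
  have hm := hh.measurable
  refine layer_cake_homog (fun p => (h p - ⟪p, x⟫) / hb) (by fun_prop) (fun p => ?_) ?_ φ hφm k hφ hint
  · have := hh.lower hδ hball p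
    have h1 : 0 ≤ δ * ‖p‖ := by positivity
    exact div_nonneg (by linarith) hhb.le
  · intro t ht p
    rw [hh.hom t ht, real_inner_smul_left]
    ring

lemma polar_vol (hh : IsSupp X h) {hb : ℝ} (hhb : 0 < hb) {x : EuclideanSpace ℝ (Fin n)}
    (hx : x ∈ interior X) :
    ∫ p, wt hb h x p = (∫ t in Ioi (0 : ℝ), Real.exp (-t) * t ^ (n + 0)) *
      (volume (polarDualSet n hb ((fun y => y - x) '' X))).toReal := by
  have := polar_integral hh hhb hx (fun _ => 1) measurable_const 0 (by simp)
    (by simpa using wt_int hh hhb hx)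
  simpa [Measure.real] using this

lemma polar_moment (hh : IsSupp X h) {hb : ℝ} (hhb : 0 < hb) {x : EuclideanSpace ℝ (Fin n)}
    (hx : x ∈ interior X) (v : EuclideanSpace ℝ (Fin n)) :
    ∫ p, (⟪p, v⟫ : ℝ) * wt hb h x p = (∫ t in Ioi (0 : ℝ), Real.exp (-t) * t ^ (n + 1)) *
      ⟪v, ∫ p in polarDualSet n hb ((fun y => y - x) '' X), p⟫ := by
  rw [polar_integral hh hhb hx (fun p => (⟪p, v⟫ : ℝ)) (by fun_prop) 1
    (by intro t _ p; rw [real_inner_smul_left, pow_one]) (wt_inner_int hh hhb hx v)]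
  congr 1
  rw [← integral_inner]
  · simp only [real_inner_comm]
  · exact continuous_id.continuousOn.integrableOn_compact (polar_compact hh hhb hx)

lemma centroid_iff (hh : IsSupp X h) {hb : ℝ} (hhb : 0 < hb) {x : EuclideanSpace ℝ (Fin n)}
    (hx : x ∈ interior X) :
    setCentroid n (polarDualSet n hb ((fun y => y - x) '' X)) = 0 ↔
      ∀ v, ∫ p, (⟪p, v⟫ : ℝ) * wt hb h x p = 0 := by
  have hpos : 0 < ∫ p, wt hb h x p := by
    rw [integral_pos_iff_support_of_nonneg (fun p => (wt_pos _ _ _).le) (wt_int hh hhb hx)]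
    have : Function.support (wt hb h x) = univ := by
      ext p; simp [(wt_pos (h := h) hb x p).ne']
    rw [this]
    exact isOpen_univ.measure_pos volume univ_nonempty
  rw [polar_vol hh hhb hx] at hpos
  have hv : (volume (polarDualSet n hb ((fun y => y - x) '' X))).toReal ≠ 0 := by
    intro h0; simp [h0] at hpos
  unfold setCentroid
  rw [smul_eq_zero_iff_right (inv_ne_zero hv)]
  simp only [polar_moment hh hhb hx, mul_eq_zero, (gam_pos (n + 1)).ne', false_or]
  constructor
  · intro h0 v; rw [h0, inner_zero_right]
  · intro h0; exact inner_self_eq_zero.1 (h0 _)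

end supp

/-- **Santaló point.** For a convex body `X ⊂ ℝⁿ` there is a unique interior point `x_S`
such that the polar body `(X − x_S)^ħ` has centroid `0`; moreover for this point the volume
`Vol((X − x_S)^ħ)` is minimal among all `Vol((X − x₀)^ħ)` with `x₀` interior to `X`. -/
theorem santalo_point (n : ℕ) (hb : ℝ) (hhb : 0 < hb)
    (X : Set (EuclideanSpace ℝ (Fin n)))
    (hXc : IsCompact X) (hXconv : Convex ℝ X) (hXint : (interior X).Nonempty) :
    (∃! xS : EuclideanSpace ℝ (Fin n), xS ∈ interior X ∧
        setCentroid n (polarDualSet n hb ((fun y => y - xS) '' X)) = 0) ∧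
      ∀ xS : EuclideanSpace ℝ (Fin n), xS ∈ interior X →
        setCentroid n (polarDualSet n hb ((fun y => y - xS) '' X)) = 0 →
        ∀ x₀ ∈ interior X,
          volume (polarDualSet n hb ((fun y => y - xS) '' X)) ≤
            volume (polarDualSet n hb ((fun y => y - x₀) '' X)) := by
  obtain ⟨h, hh⟩ := exists_supp hXc (hXint.mono interior_subset)
  refine ⟨?_, ?_⟩
  · obtain ⟨x, hx, hmin⟩ := exists_min hh hXc hXconv hXint hhb
    have hx0 := moment_zero hh hhb hx hmin
    refine ⟨x, ⟨hx, (centroid_iff hh hhb hx).2 hx0⟩, ?_⟩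
    rintro y ⟨hy, hyc⟩
    by_contra hne
    have hy0 := (centroid_iff hh hhb hy).1 hyc
    exact lt_asymm (strict_min hh hhb hx hy (Ne.symm hne) hx0) (strict_min hh hhb hy hx hne hy0)
  · intro x hx hxc y hy
    by_cases hxy : x = y
    · rw [hxy]
    have hlt := strict_min hh hhb hx hy hxy ((centroid_iff hh hhb hx).1 hxc)
    rw [polar_vol hh hhb hx, polar_vol hh hhb hy] at hlt
    have := lt_of_mul_lt_mul_left hlt (gam_pos (n + 0)).le
    exact (ENNReal.toReal_le_toReal (polar_compact hh hhb hx).measure_ne_top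
      (polar_compact hh hhb hy).measure_ne_top).1 this.le
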